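/- Let K be any field, and let G_34 ⊆ S_8 be the subgroup of order 96 generated by (1,2)(3,4), φ̃_1 = (2,3,4)(6,7,8), and κ̃ = (1,5)(2,6)(3,8)(4,7). Then the fixed field K(x_1,…,x_8)^{G_34} is K-rational. -/

import Mathlib

noncomputable section

/-- The rational function field `K(x_i : i ∈ I)` over `K`, realized as the fraction field
of the multivariate polynomial ring. -/
abbrev RFF (K : Type) [Field K] (I : Type) := FractionRing (MvPolynomial I K)

/-- The image of the variable `x_i` in the rational function field `K(x_i : i ∈ I)`. -/
noncomputable def Xvar (K : Type) [Field K] (I : Type) (i : I) : RFF K I :=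
  algebraMap (MvPolynomial I K) (RFF K I) (MvPolynomial.X i)

/-- Permutations of the variables as `K`-algebra automorphisms of the polynomial ring. -/
def renameHom (K : Type) [Field K] (I : Type) :
    Equiv.Perm I →* (MvPolynomial I K ≃ₐ[K] MvPolynomial I K) where
  toFun σ := MvPolynomial.renameEquiv K σ
  map_one' := MvPolynomial.renameEquiv_refl K
  map_mul' σ τ := (MvPolynomial.renameEquiv_trans K τ σ).symm

/-- The action of permutations of the variables on `K(x_i : i ∈ I)` by `K`-automorphisms,
determined by `σ(x_i) = x_{σ(i)}`. -/
noncomputable def permHom (K : Type) [Field K] (I : Type) :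
    Equiv.Perm I →* (RFF K I ≃ₐ[K] RFF K I) :=
  (IsFractionRing.fieldEquivOfAlgEquivHom K (RFF K I)).comp (renameHom K I)

/-- The fixed field `K(x_i : i ∈ I)^G` of a group `G` of permutations of the variables. -/
noncomputable def fixedSub (K : Type) [Field K] (I : Type) (G : Subgroup (Equiv.Perm I)) :
    IntermediateField K (RFF K I) :=
  IntermediateField.fixedField (G.map (permHom K I))

/-- An extension `L/K` is `K`-rational if it is purely transcendental over `K`, i.e. generated
by finitely many algebraically independent elements. -/
def IsRatExt (K : Type) [Field K] (L : Type*) [Field L] [Algebra K L] : Prop :=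
  ∃ (n : ℕ) (t : Fin n → L), AlgebraicIndependent K t ∧
    IntermediateField.adjoin K (Set.range t) = ⊤

/-!
The eight variables form two blocks of four. The three pairings of a block define three Möbius
involutions of the line exchanging the members of each pair. Their poles `vᵢ`, together with the
sum `s` of the block, are invariant under the Klein four-group of the block, and the block has
degree at most four over `K(s, v₀, v₁, v₂)`. The residual group `S₃` permutes the poles `vᵢ`, `wᵢ`
of the two blocks simultaneously, its involutions interchanging `v` and `w`. Hence it permutes the
sums `zᵢ = vᵢ + wᵢ`, which have degree at most `3!` over their symmetric functions, and once the
`zᵢ` are adjoined, the remaining data are recovered by Lagrange interpolation from moments at nodes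
which `S₃` permutes. The whole function field has degree at most `3! · 4 · 4 = 96 ≤ |G₃₄|` over the
eight invariants constructed in this way, so they generate the fixed field; by transcendence degree
they are algebraically independent.
-/

open IntermediateField Polynomial

section DegreeBounds

variable {K L : Type*} [Field K] [Field L] [Algebra K L] {F : IntermediateField K L}

lemma relrank_sup_adjoin_simple_le {a : L} {p : L[X]} (hp : p.Monic)
    (hpF : p ∈ lifts (algebraMap F L)) (ha : p.IsRoot a) :
    relrank F (F ⊔ K⟮a⟯) ≤ p.natDegree := by
  obtain ⟨q, rfl, hqdeg, hq⟩ := lifts_and_natDegree_eq_and_monic hpF hp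
  have hqa : aeval a q = 0 := by rwa [IsRoot, eval_map_algebraMap] at ha
  have hint : IsIntegral F a := ⟨q, hq, hqa⟩
  have hext : extendScalars (le_sup_left : F ≤ F ⊔ K⟮a⟯) = F⟮a⟯ :=
    restrictScalars_injective K (by
      rw [extendScalars_restrictScalars, restrictScalars_adjoin_eq_sup])
  have : FiniteDimensional F F⟮a⟯ := adjoin.finiteDimensional hint
  rw [relrank_eq_rank_of_le le_sup_left, hext, ← Module.finrank_eq_rank, adjoin.finrank hint,
    ← hqdeg]
  exact_mod_cast natDegree_le_natDegree (minpoly.min F a hq hqa)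

lemma mem_lifts_iff_coeff_mem {p : L[X]} :
    p ∈ lifts (algebraMap F L) ↔ ∀ k, p.coeff k ∈ F := by
  simp [lifts_iff_coeff_lifts, IntermediateField.algebraMap_apply]

lemma mem_lifts_of_X_sub_C_mul_mem {a : L} {p : L[X]} (ha : a ∈ F)
    (hp : (X - C a) * p ∈ lifts (algebraMap F L)) : p ∈ lifts (algebraMap F L) := by
  obtain ⟨q, hq⟩ := (mem_lifts _).1 hp
  refine (mem_lifts _).2 ⟨q /ₘ (X - C ⟨a, ha⟩), ?_⟩
  have hmap : (X - C (⟨a, ha⟩ : F)).map (algebraMap F L) = X - C a := by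
    simp [IntermediateField.algebraMap_apply]
  rw [map_divByMonic _ (monic_X_sub_C _), hmap, hq,
    mul_divByMonic_cancel_left _ (monic_X_sub_C a)]

lemma prod_X_sub_C_mem_lifts {n : ℕ} {z : Fin n → L}
    (h : ∀ k < n, (∏ i, (X - C (z i))).coeff k ∈ F) :
    ∏ i, (X - C (z i)) ∈ lifts (algebraMap F L) := by
  have hdeg : (∏ i, (X - C (z i))).natDegree = n := by
    rw [natDegree_finsetProd_X_sub_C_eq_card, Finset.card_univ, Fintype.card_fin]
  refine mem_lifts_iff_coeff_mem.2 fun k => ?_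
  rcases lt_trichotomy k n with hk | hk | hk
  · exact h k hk
  · rw [hk, ← congrArg (coeff _) hdeg, (monic_prod_X_sub_C z Finset.univ).coeff_natDegree]
    exact one_mem F
  · rw [coeff_eq_zero_of_natDegree_lt (hdeg.trans_lt hk)]
    exact zero_mem F

lemma relrank_sup_adjoin_range_le_factorial {n : ℕ} {z : Fin n → L}
    (hz : ∏ i, (X - C (z i)) ∈ lifts (algebraMap F L)) :
    relrank F (F ⊔ adjoin K (Set.range z)) ≤ n.factorial := by
  induction n generalizing F with
  | zero => simp
  | succ n ih =>
    have hroot : (∏ i, (X - C (z i))).IsRoot (z 0) := by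
      simp [IsRoot, eval_prod, Finset.prod_eq_zero (Finset.mem_univ (0 : Fin (n + 1)))]
    have hfirst := relrank_sup_adjoin_simple_le (monic_prod_X_sub_C z Finset.univ) hz hroot
    have hlift : ∏ i, (X - C (z i)) ∈ lifts (algebraMap ↥(F ⊔ K⟮z 0⟯) L) :=
      mem_lifts_iff_coeff_mem.2 fun k =>
        (le_sup_left : F ≤ F ⊔ K⟮z 0⟯) (mem_lifts_iff_coeff_mem.1 hz k)
    rw [Fin.prod_univ_succ] at hlift
    have hrest := ih (z := fun i => z i.succ) (mem_lifts_of_X_sub_C_mul_mem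
      (le_sup_right (a := F) (mem_adjoin_simple_self K (z 0))) hlift)
    have hsup : F ⊔ adjoin K (Set.range z) =
        F ⊔ K⟮z 0⟯ ⊔ adjoin K (Set.range fun i : Fin n => z i.succ) := by
      rw [sup_assoc, ← adjoin_union, ← Set.insert_eq, ← Fin.range_cons]
      exact congrArg _ (congrArg _ (congrArg _ (Fin.cons_self_tail z).symm))
    rw [natDegree_finsetProd_X_sub_C_eq_card, Finset.card_univ, Fintype.card_fin] at hfirst
    rw [hsup, ← relrank_mul_relrank le_sup_left le_sup_left, Nat.factorial_succ, Nat.cast_mul]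
    exact mul_le_mul' hfirst hrest

/-- The `k`-th moment `∑ zᵢᵏ yᵢ` of the values `y` at the nodes `z`. -/
def moment {R ι : Type*} [CommSemiring R] [Fintype ι] (z y : ι → R) (k : ℕ) : R :=
  ∑ i, z i ^ k * y i

lemma moment_comp_equiv {R ι κ : Type*} [CommSemiring R] [Fintype ι] [Fintype κ] (e : ι ≃ κ)
    (z y : κ → R) : moment (z ∘ e) (y ∘ e) = moment z y :=
  funext fun k => Equiv.sum_comp e fun i => z i ^ k * y i

lemma map_moment {R S ι : Type*} [CommSemiring R] [CommSemiring S] [Fintype ι] (f : R →+* S)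
    (z y : ι → R) (k : ℕ) : f (moment z y k) = moment (f ∘ z) (f ∘ y) k := by
  simp [moment]

lemma sum_eval_mul_eq_sum_coeff_mul_moment {R ι : Type*} [CommSemiring R] [Fintype ι]
    (z y : ι → R) {p : R[X]} {n : ℕ} (hp : p.natDegree < n) :
    ∑ i, p.eval (z i) * y i = ∑ k ∈ Finset.range n, p.coeff k * moment z y k := by
  simp only [eval_eq_sum_range' hp, moment, Finset.sum_mul, Finset.mul_sum, mul_assoc]
  exact Finset.sum_comm

lemma mem_of_moment_mem {ι : Type*} [Fintype ι] {z y : ι → L} (hz : Function.Injective z)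
    (hzF : ∀ i, z i ∈ F) (h : ∀ k < Fintype.card ι, moment z y k ∈ F) (i : ι) : y i ∈ F := by
  classical
  let node : ι → F := fun j => ⟨z j, hzF j⟩
  have hnode : Function.Injective node := fun j k hjk => hz (congrArg Subtype.val hjk)
  let p : F[X] := Lagrange.basis Finset.univ node i
  have hdeg : (p.map (algebraMap F L)).natDegree < Fintype.card ι := by
    rw [natDegree_map, Lagrange.natDegree_basis hnode.injOn (Finset.mem_univ i), Finset.card_univ]
    exact Nat.sub_lt (Fintype.card_pos_iff.2 ⟨i⟩) one_pos
  have heval (j : ι) : (p.map (algebraMap F L)).eval (z j) = if j = i then 1 else 0 := by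
    have hj : (p.map (algebraMap F L)).eval (z j) = algebraMap F L (p.eval (node j)) :=
      eval_map_apply (algebraMap F L) (node j)
    rw [hj]
    split_ifs with hji
    · rw [hji, Lagrange.eval_basis_self hnode.injOn (Finset.mem_univ i), map_one]
    · rw [Lagrange.eval_basis_of_ne (Ne.symm hji) (Finset.mem_univ j), map_zero]
  have hy : y i = ∑ j, (p.map (algebraMap F L)).eval (z j) * y j := by simp [heval]
  rw [hy, sum_eval_mul_eq_sum_coeff_mul_moment z y hdeg]
  refine sum_mem fun k hk => mul_mem ?_ (h k (Finset.mem_range.1 hk))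
  rw [coeff_map]
  exact (p.coeff k).2

lemma mem_of_sum_mem_of_mul_add_mul_mem {α β x y : L} (hne : α ≠ β) (hα : α ∈ F) (hβ : β ∈ F)
    (hsum : x + y ∈ F) (hmix : α * x + β * y ∈ F) : x ∈ F ∧ y ∈ F := by
  have hnodes : Function.Injective ![α, β] := by
    simpa [Function.Injective, Fin.forall_fin_two, eq_comm] using hne
  have h := mem_of_moment_mem (F := F) (y := ![x, y]) hnodes
    (by simp [Fin.forall_fin_two, *]) (by
      intro k hk
      rw [Fintype.card_fin] at hk
      interval_cases k <;> simpa [moment])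
  exact ⟨h 0, h 1⟩

end DegreeBounds

section ResidualInvariants

variable {R : Type*} [CommRing R] (v w : Fin 3 → R) (s s' : R)

/-- The combinations of `vᵢ` and `wᵢ` with coefficients `zᵢ₊₁` and `zᵢ₊₂`, where `z = v + w`. They
are permuted by the residual `S₃` in the same way as the `zᵢ`. -/
def mixedSum (i : Fin 3) : R :=
  (v + w) (i + 1) * v i + (v + w) (i + 2) * w i

lemma mixedSum_comp_add_one :
    mixedSum (v ∘ Equiv.addRight 1) (w ∘ Equiv.addRight 1) = mixedSum v w ∘ Equiv.addRight 1 := by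
  funext i
  simp [mixedSum, add_right_comm]

lemma neg_add_one_fin_three (i : Fin 3) : -(i + 1) = -i + 2 := by decide +revert

lemma neg_add_two_fin_three (i : Fin 3) : -(i + 2) = -i + 1 := by decide +revert

lemma mixedSum_comp_neg :
    mixedSum (w ∘ Equiv.neg _) (v ∘ Equiv.neg _) = mixedSum v w ∘ Equiv.neg _ := by
  funext i
  simp only [mixedSum, Function.comp_apply, Pi.add_apply, Equiv.neg_apply, neg_add_one_fin_three,
    neg_add_two_fin_three]
  ring

/-- The two sums of `zᵢ² zⱼ` over the orbits of the cyclic group of order 3. The remaining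
involutions of `S₃` exchange them. -/
def cyclicSum (z : Fin 3 → R) : Fin 2 → R :=
  ![∑ i, z i ^ 2 * z (i + 1), ∑ i, z i ^ 2 * z (i + 2)]

lemma cyclicSum_comp_add_one (z : Fin 3 → R) : cyclicSum (z ∘ Equiv.addRight 1) = cyclicSum z := by
  have hsum (j : Fin 3) := Equiv.sum_comp (Equiv.addRight 1) fun i => z i ^ 2 * z (i + j)
  funext j
  fin_cases j
  · simpa [cyclicSum] using hsum 1
  · simpa [cyclicSum, add_right_comm] using hsum 2

lemma cyclicSum_comp_neg (z : Fin 3 → R) :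
    cyclicSum (z ∘ Equiv.neg _) = cyclicSum z ∘ Equiv.swap 0 1 := by
  have hsum (j : Fin 3) := Equiv.sum_comp (Equiv.neg (Fin 3)) fun i => z i ^ 2 * z (i + j)
  funext j
  fin_cases j
  · simpa [cyclicSum, neg_add_one_fin_three, -neg_add_rev] using hsum 2
  · simpa [cyclicSum, neg_add_two_fin_three, -neg_add_rev] using hsum 1

lemma cyclicSum_injective [IsDomain R] {z : Fin 3 → R} (hz : Function.Injective z) :
    Function.Injective (cyclicSum z) := by
  have hdiff : cyclicSum z 0 - cyclicSum z 1 = (z 0 - z 1) * (z 1 - z 2) * (z 0 - z 2) := by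
    simp only [cyclicSum, Fin.isValue, Fin.sum_univ_three, zero_add, Fin.reduceAdd,
      Matrix.cons_val_zero, Matrix.cons_val_one, Matrix.cons_val_fin_one]
    ring
  have hne : cyclicSum z 0 ≠ cyclicSum z 1 := by
    rw [← sub_ne_zero, hdiff]
    simp [sub_ne_zero, hz.eq_iff]
  simpa [Function.Injective, Fin.forall_fin_two, eq_comm] using hne

/-- The eight generating invariants of the residual `S₃` acting on `v`, `w`, `s`, `s'`: the
coefficients of the cubic with roots `z = v + w`, the moments of `mixedSum v w` at the nodes `z`,
and the moments of `s`, `s'` at the two nodes `cyclicSum z`. -/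
def residualInvariant : Fin 3 ⊕ Fin 3 ⊕ Fin 2 → R :=
  Sum.elim (fun k => (∏ i, (X - C ((v + w) i))).coeff k)
    (Sum.elim (fun k => moment (v + w) (mixedSum v w) k)
      (fun k => moment (cyclicSum (v + w)) ![s, s'] k))

lemma residualInvariant_comp_add_one :
    residualInvariant (v ∘ Equiv.addRight 1) (w ∘ Equiv.addRight 1) s s' =
      residualInvariant v w s s' := by
  have hz : v ∘ Equiv.addRight 1 + w ∘ Equiv.addRight 1 = (v + w) ∘ Equiv.addRight 1 := rfl
  have hprod := Equiv.prod_comp (Equiv.addRight 1) fun i => X - C ((v + w) i)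
  simp only [residualInvariant, hz, mixedSum_comp_add_one, cyclicSum_comp_add_one,
    moment_comp_equiv, Function.comp_apply, hprod]

lemma residualInvariant_comp_neg :
    residualInvariant (w ∘ Equiv.neg _) (v ∘ Equiv.neg _) s' s = residualInvariant v w s s' := by
  have hz : w ∘ Equiv.neg _ + v ∘ Equiv.neg _ = (v + w) ∘ Equiv.neg _ := by
    rw [add_comm]; rfl
  have hprod := Equiv.prod_comp (Equiv.neg _) fun i => X - C ((v + w) i)
  have hs : ![s', s] = ![s, s'] ∘ Equiv.swap 0 1 := by ext i; fin_cases i <;> rfl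
  simp only [residualInvariant, hz, mixedSum_comp_neg, cyclicSum_comp_neg, hs,
    moment_comp_equiv, Function.comp_apply, hprod]

lemma map_residualInvariant {S : Type*} [CommRing S] (f : R →+* S) (k : Fin 3 ⊕ Fin 3 ⊕ Fin 2) :
    f (residualInvariant v w s s' k) = residualInvariant (f ∘ v) (f ∘ w) (f s) (f s') k := by
  have hmixed : f ∘ mixedSum v w = mixedSum (f ∘ v) (f ∘ w) := by
    funext i; simp [mixedSum]
  have hz : f ∘ (v + w) = f ∘ v + f ∘ w := by
    funext i; simp
  have hcyclic : f ∘ cyclicSum (v + w) = cyclicSum (f ∘ v + f ∘ w) := by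
    ext i; fin_cases i <;> simp [cyclicSum]
  rcases k with k | k | k
  · simp [residualInvariant, ← coeff_map, Polynomial.map_prod]
  · simp [residualInvariant, map_moment, hmixed, hz]
  · have hs : f ∘ ![s, s'] = ![f s, f s'] := by ext i; fin_cases i <;> rfl
    simp [residualInvariant, map_moment, hcyclic, hs]

variable {K L : Type*} [Field K] [Field L] [Algebra K L] {F : IntermediateField K L}
  {v w : Fin 3 → L} {s s' : L}

lemma relrank_sup_adjoin_add_le_six (hF : ∀ k, residualInvariant v w s s' k ∈ F) :
    relrank F (F ⊔ adjoin K (Set.range (v + w))) ≤ 6 :=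
  relrank_sup_adjoin_range_le_factorial
    (prod_X_sub_C_mem_lifts fun k hk => hF (.inl ⟨k, hk⟩))

lemma mem_of_residualInvariant_mem (hF : ∀ k, residualInvariant v w s s' k ∈ F)
    (hz : Function.Injective (v + w)) (hzF : ∀ i, (v + w) i ∈ F) :
    (∀ i, v i ∈ F ∧ w i ∈ F) ∧ s ∈ F ∧ s' ∈ F := by
  have hmixed : ∀ i, mixedSum v w i ∈ F :=
    mem_of_moment_mem hz hzF fun k hk => hF (.inr (.inl ⟨k, hk⟩))
  have hcyclic : ∀ i, cyclicSum (v + w) i ∈ F := by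
    have hterm (i j : Fin 3) : (v + w) i ^ 2 * (v + w) j ∈ F :=
      mul_mem (pow_mem (hzF i) 2) (hzF j)
    simpa [cyclicSum, Fin.forall_fin_two] using
      ⟨sum_mem fun i _ => hterm i (i + 1), sum_mem fun i _ => hterm i (i + 2)⟩
  have hs : ∀ i, ![s, s'] i ∈ F :=
    mem_of_moment_mem (cyclicSum_injective hz) hcyclic fun k hk => hF (.inr (.inr ⟨k, hk⟩))
  refine ⟨fun i => ?_, hs 0, hs 1⟩
  exact mem_of_sum_mem_of_mul_add_mul_mem (hz.ne (by simp)) (hzF (i + 1)) (hzF (i + 2)) (hzF i)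
    (hmixed i)

end ResidualInvariants

section PairingPoles

variable {L : Type*} [Field L] (y : Fin 4 → L)

/-- The pole of the Möbius involution of the line which exchanges `a` with `b` and `c` with `d`. -/
def exchangePole (a b c d : L) : L :=
  (a * b - c * d) / (a + b - c - d)

lemma exchangePole_swap_left (a b c d : L) : exchangePole b a c d = exchangePole a b c d := by
  rw [exchangePole, exchangePole, mul_comm, add_comm b]

lemma exchangePole_swap_right (a b c d : L) : exchangePole a b d c = exchangePole a b c d := by
  rw [exchangePole, exchangePole, mul_comm d, sub_right_comm]

lemma exchangePole_swap_pairs (a b c d : L) : exchangePole c d a b = exchangePole a b c d := by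
  rw [exchangePole, exchangePole, ← neg_div_neg_eq, neg_sub]
  congr 1
  ring

lemma sub_exchangePole_mul_sub_exchangePole {a b c d : L} (hb : a + b - c - d ≠ 0)
    (hc : a + c - d - b ≠ 0) (hd : a + d - b - c ≠ 0) :
    (a - exchangePole a b c d) * (b - exchangePole a b c d) =
      (exchangePole a b c d - exchangePole a c d b) *
        (exchangePole a b c d - exchangePole a d b c) := by
  simp only [exchangePole]
  field_simp
  ring

/-- The poles of a block of four: the pole number `i` belongs to the pairing `{0, i + 1}`, `{j, k}`
of `Fin 4`, so that `Equiv.Perm (Fin 4)` permutes the poles through its quotient `S₃`. -/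
def pairingPole (i : Fin 3) : L :=
  exchangePole (y 0) (y i.succ) (y (i + 1).succ) (y (i + 2).succ)

/-- The denominator of `pairingPole y i`. -/
def pairingGap (i : Fin 3) : L :=
  y 0 + y i.succ - y (i + 1).succ - y (i + 2).succ

lemma map_pairingPole {M : Type*} [Field M] (f : L →+* M) :
    f ∘ pairingPole y = pairingPole (f ∘ y) := by
  funext i
  simp [pairingPole, exchangePole]

lemma pairingPole_comp_swap_zero_succ (i j : Fin 3) :
    pairingPole (y ∘ Equiv.swap 0 i.succ) j = pairingPole y (i + i - j) := by
  fin_cases i <;> fin_cases j <;> first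
    | exact exchangePole_swap_left ..
    | exact (exchangePole_swap_left ..).trans (exchangePole_swap_pairs ..)
    | exact (exchangePole_swap_right ..).trans (exchangePole_swap_pairs ..)

lemma pairingPole_comp_swap_two_three :
    pairingPole (y ∘ Equiv.swap 2 3) = pairingPole y ∘ Equiv.neg _ := by
  funext i
  fin_cases i <;> exact exchangePole_swap_right ..

lemma pairingPole_comp_klein :
    pairingPole (y ∘ (Equiv.swap 0 1 * Equiv.swap 2 3 : Equiv.Perm (Fin 4))) = pairingPole y := by
  funext i
  rw [Equiv.Perm.coe_mul, ← Function.comp_assoc, pairingPole_comp_swap_two_three]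
  exact (pairingPole_comp_swap_zero_succ y 0 (-i)).trans (by simp)

lemma pairingPole_comp_cycle :
    pairingPole (y ∘ (Equiv.swap 1 2 * Equiv.swap 2 3 : Equiv.Perm (Fin 4))) =
      pairingPole y ∘ Equiv.addRight 1 := by
  have hperm : ⇑(Equiv.swap 1 2 * Equiv.swap 2 3 : Equiv.Perm (Fin 4)) = ![0, 2, 3, 1] := by
    decide
  funext i
  rw [hperm]
  fin_cases i <;> rfl

variable {y}

lemma pairingPole_mul_pairingGap {i : Fin 3} (h : pairingGap y i ≠ 0) :
    pairingPole y i * pairingGap y i = y 0 * y i.succ - y (i + 1).succ * y (i + 2).succ :=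
  div_mul_cancel₀ _ h

lemma sub_pairingPole_mul_sub_pairingPole (h : ∀ i, pairingGap y i ≠ 0) (i : Fin 3) :
    (y 0 - pairingPole y i) * (y i.succ - pairingPole y i) =
      (pairingPole y i - pairingPole y (i + 1)) * (pairingPole y i - pairingPole y (i + 2)) := by
  fin_cases i
  · exact sub_exchangePole_mul_sub_exchangePole (h 0) (h 1) (h 2)
  · exact sub_exchangePole_mul_sub_exchangePole (h 1) (h 2) (h 0)
  · exact sub_exchangePole_mul_sub_exchangePole (h 2) (h 0) (h 1)

lemma sub_pairingPole_ne_zero (hy : Function.Injective y) {i : Fin 3} (h : pairingGap y i ≠ 0) :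
    y 0 - pairingPole y i ≠ 0 := by
  have hfactor : (y 0 - pairingPole y i) * pairingGap y i =
      (y 0 - y (i + 1).succ) * (y 0 - y (i + 2).succ) := by
    rw [sub_mul, pairingPole_mul_pairingGap h, pairingGap]
    ring
  have hne (j : Fin 3) : y 0 - y j.succ ≠ 0 := sub_ne_zero.2 (hy.ne (Fin.succ_ne_zero j).symm)
  exact left_ne_zero_of_mul (hfactor.trans_ne (mul_ne_zero (hne _) (hne _)))

/-- The quartic polynomial whose roots are four elements with sum `s` and poles `p`: substituting
`y i.succ = p i + (p i - p (i + 1)) * (p i - p (i + 2)) / (y 0 - p i)` into `∑ i, y i = s` and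
clearing denominators yields an equation of degree four for `y 0`. -/
def poleQuartic {R : Type*} [CommRing R] (s : R) (p : Fin 3 → R) : R[X] :=
  (X + C (∑ i, p i - s)) * ∏ i, (X - C (p i)) +
    ∑ i, C ((p i - p (i + 1)) * (p i - p (i + 2))) * ((X - C (p (i + 1))) * (X - C (p (i + 2))))

lemma monic_poleQuartic {R : Type*} [CommRing R] [Nontrivial R] (s : R) (p : Fin 3 → R) :
    (poleQuartic s p).Monic := by
  simp only [poleQuartic, Fin.sum_univ_three, Fin.prod_univ_three]
  monicity!

lemma natDegree_poleQuartic {R : Type*} [CommRing R] [Nontrivial R] (s : R) (p : Fin 3 → R) :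
    (poleQuartic s p).natDegree = 4 := by
  simp only [poleQuartic, Fin.sum_univ_three, Fin.prod_univ_three]
  compute_degree!

lemma map_poleQuartic {R S : Type*} [CommRing R] [CommRing S] (f : R →+* S) (s : R)
    (p : Fin 3 → R) :
    (poleQuartic s p).map f = poleQuartic (f s) (f ∘ p) := by
  simp [poleQuartic, Polynomial.map_sum, Polynomial.map_prod]

lemma isRoot_poleQuartic (h : ∀ i, pairingGap y i ≠ 0) :
    (poleQuartic (∑ i, y i) (pairingPole y)).IsRoot (y 0) := by
  set p := pairingPole y
  have h0 : (y 0 - p 0) * (y 1 - p 0) = (p 0 - p 1) * (p 0 - p 2) :=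
    sub_pairingPole_mul_sub_pairingPole h 0
  have h1 : (y 0 - p 1) * (y 2 - p 1) = (p 1 - p 2) * (p 1 - p 0) :=
    sub_pairingPole_mul_sub_pairingPole h 1
  have h2 : (y 0 - p 2) * (y 3 - p 2) = (p 2 - p 0) * (p 2 - p 1) :=
    sub_pairingPole_mul_sub_pairingPole h 2
  simp only [IsRoot, Fin.isValue, poleQuartic, Fin.sum_univ_three, Fin.sum_univ_four, map_sub,
    map_add, Fin.prod_univ_three, map_mul, zero_add, Fin.reduceAdd, eval_add, eval_mul, eval_X,
    eval_sub, eval_C]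
  linear_combination -(y 0 - p 1) * (y 0 - p 2) * h0 - (y 0 - p 0) * (y 0 - p 2) * h1
    - (y 0 - p 0) * (y 0 - p 1) * h2

variable {K : Type*} [Field K] [Algebra K L] {F : IntermediateField K L}

lemma poleQuartic_mem_lifts {s : L} {p : Fin 3 → L} (hs : s ∈ F) (hp : ∀ i, p i ∈ F) :
    poleQuartic s p ∈ lifts (algebraMap F L) :=
  (mem_lifts _).2 ⟨poleQuartic ⟨s, hs⟩ fun i => ⟨p i, hp i⟩, map_poleQuartic _ _ _⟩

lemma relrank_sup_adjoin_zero_le_four (h : ∀ i, pairingGap y i ≠ 0) (hs : ∑ i, y i ∈ F)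
    (hp : ∀ i, pairingPole y i ∈ F) : relrank F (F ⊔ K⟮y 0⟯) ≤ 4 := by
  simpa [natDegree_poleQuartic] using relrank_sup_adjoin_simple_le (monic_poleQuartic _ _)
    (poleQuartic_mem_lifts hs hp) (isRoot_poleQuartic h)

lemma mem_of_pairingPole_mem (hy : Function.Injective y) (h : ∀ i, pairingGap y i ≠ 0)
    (hp : ∀ i, pairingPole y i ∈ F) (h0 : y 0 ∈ F) (i : Fin 4) : y i ∈ F := by
  cases i using Fin.cases with
  | zero => exact h0
  | succ i =>
    have hyi : y i.succ = pairingPole y i + (pairingPole y i - pairingPole y (i + 1)) *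
        (pairingPole y i - pairingPole y (i + 2)) / (y 0 - pairingPole y i) := by
      rw [← sub_pairingPole_mul_sub_pairingPole h,
        mul_div_cancel_left₀ _ (sub_pairingPole_ne_zero hy (h i)), add_sub_cancel]
    rw [hyi]
    exact add_mem (hp i) (div_mem (mul_mem (sub_mem (hp i) (hp _)) (sub_mem (hp i) (hp _)))
      (sub_mem h0 (hp i)))

lemma pairingPole_injective (hy : Function.Injective y) (h : ∀ i, pairingGap y i ≠ 0) :
    Function.Injective (pairingPole y) := by
  have hdiff (i : Fin 3) : (pairingPole y i - pairingPole y (i + 1)) *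
      (pairingGap y i * pairingGap y (i + 1)) =
        pairingGap y (i + 2) * (y 0 - y (i + 2).succ) * (y i.succ - y (i + 1).succ) := by
    have hadd : ∀ i : Fin 3, i + 1 + 1 = i + 2 ∧ i + 1 + 2 = i ∧ i + 2 + 1 = i ∧
        i + 2 + 2 = i + 1 := by decide
    have hsucc := pairingPole_mul_pairingGap (h (i + 1))
    rw [sub_mul, ← mul_assoc, pairingPole_mul_pairingGap (h i), mul_left_comm, hsucc]
    simp only [pairingGap, hadd]
    ring
  have hne (i : Fin 3) : pairingPole y i ≠ pairingPole y (i + 1) := by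
    refine sub_ne_zero.1 (left_ne_zero_of_mul ((hdiff i).trans_ne ?_))
    simp [h, sub_eq_zero, hy.eq_iff, (Fin.succ_ne_zero _).symm]
  intro i j hij
  have hcyc : ∀ i j : Fin 3, i = j ∨ j = i + 1 ∨ i = j + 1 := by decide
  rcases hcyc i j with hj | rfl | rfl
  · exact hj
  · exact absurd hij (hne i)
  · exact absurd hij.symm (hne j)

end PairingPoles

section BlockInvariants

variable {L : Type*} [Field L] (y y' : Fin 4 → L)

/-- The eight generating invariants of `G₃₄`, for the values `y`, `y'` of the variables in the
two blocks of four. -/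
def blockInvariant : Fin 3 ⊕ Fin 3 ⊕ Fin 2 → L :=
  residualInvariant (pairingPole y) (pairingPole y') (∑ i, y i) (∑ i, y' i)

lemma blockInvariant_comp_klein :
    blockInvariant (y ∘ (Equiv.swap 0 1 * Equiv.swap 2 3 : Equiv.Perm (Fin 4))) y' =
      blockInvariant y y' := by
  simp only [blockInvariant, pairingPole_comp_klein, Function.comp_apply, Equiv.sum_comp]

lemma blockInvariant_comp_cycle :
    blockInvariant (y ∘ (Equiv.swap 1 2 * Equiv.swap 2 3 : Equiv.Perm (Fin 4)))
      (y' ∘ (Equiv.swap 1 2 * Equiv.swap 2 3 : Equiv.Perm (Fin 4))) = blockInvariant y y' := by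
  simp only [blockInvariant, pairingPole_comp_cycle, residualInvariant_comp_add_one,
    Function.comp_apply, Equiv.sum_comp]

lemma blockInvariant_comp_swap_two_three :
    blockInvariant (y' ∘ Equiv.swap 2 3) (y ∘ Equiv.swap 2 3) = blockInvariant y y' := by
  simp only [blockInvariant, pairingPole_comp_swap_two_three, residualInvariant_comp_neg,
    Function.comp_apply, Equiv.sum_comp]

lemma map_blockInvariant {M : Type*} [Field M] (f : L →+* M) (k : Fin 3 ⊕ Fin 3 ⊕ Fin 2) :
    f (blockInvariant y y' k) = blockInvariant (f ∘ y) (f ∘ y') k := by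
  simp [blockInvariant, map_residualInvariant, map_pairingPole]

variable {y y'}

lemma pairingPole_add_injective (hp : Function.Injective (pairingPole y)) (τ : Fin 3 → L →+* L)
    (hτ : ∀ i, τ i ∘ y = y ∘ Equiv.swap 0 i.succ) (hτ' : ∀ i, τ i ∘ y' = y') :
    Function.Injective (pairingPole y + pairingPole y') := by
  intro i j hij
  have hmap (k : Fin 3) : τ i (pairingPole y k + pairingPole y' k) =
      pairingPole y (i + i - k) + pairingPole y' k := by
    rw [map_add, ← pairingPole_comp_swap_zero_succ, ← hτ, ← map_pairingPole]
    nth_rw 2 [← hτ' i]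
    rw [← map_pairingPole]
    rfl
  have hpole : pairingPole y j = pairingPole y (i + i - j) := by
    have hdiff := congrArg (τ i) hij
    simp only [Pi.add_apply, hmap, add_sub_cancel_right] at hij hdiff
    linear_combination hdiff - hij
  have hfix : ∀ i j : Fin 3, j = i + i - j → i = j := by decide
  exact hfix i j (hp hpole)

variable {K : Type*} [Field K] [Algebra K L]

lemma relrank_adjoin_blockInvariant_top_le (hy : Function.Injective y)
    (hy' : Function.Injective y') (h : ∀ i, pairingGap y i ≠ 0) (h' : ∀ i, pairingGap y' i ≠ 0)
    (hz : Function.Injective (pairingPole y + pairingPole y'))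
    (htop : adjoin K (Set.range y ∪ Set.range y') = ⊤) :
    relrank (adjoin K (Set.range (blockInvariant y y'))) ⊤ ≤ 96 := by
  set F := adjoin K (Set.range (blockInvariant y y'))
  let F₁ := F ⊔ adjoin K (Set.range (pairingPole y + pairingPole y'))
  let F₂ := F₁ ⊔ K⟮y 0⟯
  let F₃ := F₂ ⊔ K⟮y' 0⟯
  have h₁ : F ≤ F₁ := le_sup_left
  have h₂ : F₁ ≤ F₂ := le_sup_left
  have h₃ : F₂ ≤ F₃ := le_sup_left
  have hF (k) : blockInvariant y y' k ∈ F := subset_adjoin K _ ⟨k, rfl⟩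
  obtain ⟨hp, hs, hs'⟩ := mem_of_residualInvariant_mem (F := F₁) (fun k => h₁ (hF k)) hz
    fun i => (le_sup_right : _ ≤ F₁) (subset_adjoin K _ ⟨i, rfl⟩)
  have hdeg₁ : relrank F F₁ ≤ 6 := relrank_sup_adjoin_add_le_six hF
  have hdeg₂ : relrank F₁ F₂ ≤ 4 := relrank_sup_adjoin_zero_le_four h hs fun i => (hp i).1
  have hdeg₃ : relrank F₂ F₃ ≤ 4 :=
    relrank_sup_adjoin_zero_le_four h' (h₂ hs') fun i => h₂ (hp i).2
  have hF₃ : F₃ = ⊤ := by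
    rw [eq_top_iff, ← htop, adjoin_le_iff]
    rintro _ (⟨i, rfl⟩ | ⟨i, rfl⟩)
    · exact h₃ (mem_of_pairingPole_mem hy h (fun i => h₂ (hp i).1)
        ((le_sup_right : _ ≤ F₂) (mem_adjoin_simple_self K _)) i)
    · exact mem_of_pairingPole_mem hy' h' (fun i => h₃ (h₂ (hp i).2))
        ((le_sup_right : _ ≤ F₃) (mem_adjoin_simple_self K _)) i
  rw [← hF₃, ← relrank_mul_relrank (h₁.trans h₂) h₃, ← relrank_mul_relrank h₁ h₂]
  refine (mul_le_mul' (mul_le_mul' hdeg₁ hdeg₂) hdeg₃).trans ?_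
  norm_num

end BlockInvariants

section RationalityCriterion

open scoped IntermediateField.algebraAdjoinAdjoin in
lemma algebraicIndependent_of_isAlgebraic_adjoin {K L : Type*} [Field K] [Field L] [Algebra K L]
    {ι : Type*} [Finite ι] {t : ι → L} [Algebra.IsAlgebraic (adjoin K (Set.range t)) L]
    (hcard : Nat.card ι ≤ Algebra.trdeg K L) : AlgebraicIndependent K t := by
  have halg : Algebra.IsAlgebraic (Algebra.adjoin K (Set.range t)) L :=
    (IsFractionRing.comap_isAlgebraic_iff (K := adjoin K (Set.range t))).2 inferInstance
  exact (Algebra.IsAlgebraic.isTranscendenceBasis_of_lift_le_trdeg_of_finite K t (by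
    simpa [← Nat.cast_card] using hcard)).1

lemma isRatExt_adjoin_range {K : Type} [Field K] {L : Type*} [Field L] [Algebra K L]
    {ι : Type*} [Finite ι] {t : ι → L} (ht : AlgebraicIndependent K t) :
    IsRatExt K (adjoin K (Set.range t)) := by
  let e := (Finite.equivFin ι).symm
  let u (i : ι) : adjoin K (Set.range t) := ⟨t i, subset_adjoin K _ ⟨i, rfl⟩⟩
  have hu : AlgebraicIndependent K u :=
    ((adjoin K (Set.range t)).val.algebraicIndependent_iff Subtype.val_injective).1 ht
  refine ⟨_, u ∘ e, hu.comp e e.injective, ?_⟩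
  apply IntermediateField.lift_injective
  rw [lift_adjoin, lift_top, e.surjective.range_comp, ← Set.range_comp]
  rfl

variable {K I : Type} [Field K]

lemma permHom_Xvar (σ : Equiv.Perm I) (i : I) : permHom K I σ (Xvar K I i) = Xvar K I (σ i) := by
  simp [permHom, Xvar, renameHom]

lemma Xvar_injective : Function.Injective (Xvar K I) :=
  (IsFractionRing.injective _ _).comp MvPolynomial.X_injective

lemma permHom_injective : Function.Injective (permHom K I) := fun σ τ h =>
  Equiv.ext fun i => Xvar_injective (K := K) (by rw [← permHom_Xvar, ← permHom_Xvar, h])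

lemma algebraicIndependent_Xvar : AlgebraicIndependent K (Xvar K I) :=
  (MvPolynomial.algebraicIndependent_X I K).map'
    (f := IsScalarTower.toAlgHom K (MvPolynomial I K) (RFF K I)) (IsFractionRing.injective _ _)

lemma adjoin_range_Xvar : adjoin K (Set.range (Xvar K I)) = ⊤ := by
  let ι := IsScalarTower.toAlgHom K (MvPolynomial I K) (RFF K I)
  have hrange : ι.range = Algebra.adjoin K (Set.range (Xvar K I)) := by
    rw [← Algebra.map_top, ← MvPolynomial.adjoin_range_X, AlgHom.map_adjoin, ← Set.range_comp]
    rfl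
  rw [← IsFractionRing.algHom_fieldRange_eq_of_comp_eq_of_range_eq
    (f := AlgHom.id K (RFF K I)) (g := ι) rfl hrange, AlgHom.fieldRange_eq_top]
  exact Function.surjective_id

lemma Xvar_add_sub_sub_ne_zero {i j k l : I} (hj : j ≠ i) (hk : k ≠ i) (hl : l ≠ i) :
    Xvar K I i + Xvar K I j - Xvar K I k - Xvar K I l ≠ 0 := by
  classical
  intro h
  have hpoly : (MvPolynomial.X i + .X j - .X k - .X l : MvPolynomial I K) = 0 :=
    IsFractionRing.injective _ (RFF K I) (by simpa [Xvar] using h)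
  simpa [hj, hk, hl] using congrArg (MvPolynomial.eval (Pi.single i 1)) hpoly

variable (G : Subgroup (Equiv.Perm I))

lemma mem_fixedSub_iff {a : RFF K I} : a ∈ fixedSub K I G ↔ ∀ σ ∈ G, permHom K I σ a = a := by
  simp [fixedSub, mem_fixedField_iff]

lemma finrank_fixedSub [Finite I] : Module.finrank (fixedSub K I G) (RFF K I) = Nat.card G := by
  let e : G ≃* G.map (permHom K I) := G.equivMapOfInjective _ permHom_injective
  have : Finite (G.map (permHom K I)) := .of_equiv G e.toEquiv
  have : Fintype (G.map (permHom K I)) := .ofFinite _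
  rw [Nat.card_congr e.toEquiv, Nat.card_eq_fintype_card]
  exact FixedPoints.finrank_eq_card (G.map (permHom K I)) (RFF K I)

lemma isRatExt_fixedSub_of_rank_le [Finite I] {ι : Type*} [Finite ι] {t : ι → RFF K I}
    (hcard : Nat.card ι ≤ Nat.card I) (ht : ∀ i, t i ∈ fixedSub K I G)
    (hrank : Module.rank (adjoin K (Set.range t)) (RFF K I) ≤ Nat.card G) :
    IsRatExt K (fixedSub K I G) := by
  have hfin : Module.Finite (adjoin K (Set.range t)) (RFF K I) :=
    Module.rank_lt_aleph0_iff.1 (hrank.trans_lt Cardinal.natCast_lt_aleph0)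
  have hgen : adjoin K (Set.range t) = fixedSub K I G := by
    refine eq_of_le_of_finrank_le' (adjoin_le_iff.2 (Set.range_subset_iff.2 ht)) ?_
    rw [finrank_fixedSub]
    exact Module.finrank_le_of_rank_le hrank
  have htrdeg : Nat.card ι ≤ Algebra.trdeg K (RFF K I) := by
    refine le_trans ?_ algebraicIndependent_Xvar.cardinalMk_le_trdeg
    rw [← Nat.cast_card]
    exact_mod_cast hcard
  rw [← hgen]
  exact isRatExt_adjoin_range (algebraicIndependent_of_isAlgebraic_adjoin htrdeg)

end RationalityCriterion

section RationalityG34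

/-- The generator `(1,2)(3,4)`, with the points numbered from `0`. -/
def kleinGenerator : Equiv.Perm (Fin 8) :=
  Equiv.swap 0 1 * Equiv.swap 2 3

/-- The generator `φ̃₁ = (2,3,4)(6,7,8)`, with the points numbered from `0`. -/
def cyclicGenerator : Equiv.Perm (Fin 8) :=
  (Equiv.swap 1 2 * Equiv.swap 2 3) * (Equiv.swap 5 6 * Equiv.swap 6 7)

/-- The generator `κ̃ = (1,5)(2,6)(3,8)(4,7)`, with the points numbered from `0`. -/
def exchangeGenerator : Equiv.Perm (Fin 8) :=
  Equiv.swap 0 4 * Equiv.swap 1 5 * Equiv.swap 2 7 * Equiv.swap 3 6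

/-- The group `G₃₄ ⊆ S₈`. -/
def groupG34 : Subgroup (Equiv.Perm (Fin 8)) :=
  Subgroup.closure {kleinGenerator, cyclicGenerator, exchangeGenerator}

/-- The elements of `groupG34` in normal form: a product of elements of the two Klein four-groups
of the blocks and of an element of the residual `S₃`. -/
def normalForm (p : (Fin 2 × Fin 2) × (Fin 2 × Fin 2) × Fin 3 × Fin 2) : groupG34 :=
  let g : groupG34 := ⟨kleinGenerator, Subgroup.subset_closure (by simp)⟩
  let φ : groupG34 := ⟨cyclicGenerator, Subgroup.subset_closure (by simp)⟩
  let κ : groupG34 := ⟨exchangeGenerator, Subgroup.subset_closure (by simp)⟩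
  let klein (e : Fin 2 × Fin 2) : groupG34 := g ^ (e.1 : ℕ) * (φ * g * φ⁻¹) ^ (e.2 : ℕ)
  klein p.1 * (κ * klein p.2.1 * κ⁻¹) * φ ^ (p.2.2.1 : ℕ) * κ ^ (p.2.2.2 : ℕ)

lemma normalForm_injective : Function.Injective normalForm := by
  have h : Function.Injective fun p i => (normalForm p : Equiv.Perm (Fin 8)) i := by
    decide +kernel
  exact h.of_comp (f := fun (σ : groupG34) i => (σ : Equiv.Perm (Fin 8)) i)

lemma card_groupG34_ge : 96 ≤ Nat.card groupG34 := by
  simpa using Nat.card_le_card_of_injective normalForm normalForm_injective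

/-- The inclusion of the first block of four points. -/
abbrev leftBlock : Fin 4 → Fin 8 := Fin.castAdd 4

/-- The inclusion of the second block of four points. -/
abbrev rightBlock : Fin 4 → Fin 8 := Fin.natAdd 4

lemma blockInvariant_comp_of_mem {L : Type*} [Field L] {σ : Equiv.Perm (Fin 8)}
    (hσ : σ ∈ groupG34) (x : Fin 8 → L) :
    blockInvariant (x ∘ σ ∘ leftBlock) (x ∘ σ ∘ rightBlock) =
      blockInvariant (x ∘ leftBlock) (x ∘ rightBlock) := by
  induction hσ using Subgroup.closure_induction generalizing x with
  | mem σ h =>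
    rcases h with rfl | rfl | rfl
    · have hl : kleinGenerator ∘ leftBlock =
          leftBlock ∘ (Equiv.swap 0 1 * Equiv.swap 2 3 : Equiv.Perm (Fin 4)) := by decide
      have hr : kleinGenerator ∘ rightBlock = rightBlock := by decide
      simp only [hl, hr, ← Function.comp_assoc, blockInvariant_comp_klein]
    · have hl : cyclicGenerator ∘ leftBlock =
          leftBlock ∘ (Equiv.swap 1 2 * Equiv.swap 2 3 : Equiv.Perm (Fin 4)) := by decide
      have hr : cyclicGenerator ∘ rightBlock =
          rightBlock ∘ (Equiv.swap 1 2 * Equiv.swap 2 3 : Equiv.Perm (Fin 4)) := by decide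
      simp only [hl, hr, ← Function.comp_assoc, blockInvariant_comp_cycle]
    · have hl : exchangeGenerator ∘ leftBlock = rightBlock ∘ Equiv.swap 2 3 := by decide
      have hr : exchangeGenerator ∘ rightBlock = leftBlock ∘ Equiv.swap 2 3 := by decide
      simp only [hl, hr, ← Function.comp_assoc, blockInvariant_comp_swap_two_three]
  | one => rfl
  | mul σ τ _ _ hσ hτ => exact (hτ (x ∘ σ)).trans (hσ x)
  | inv σ _ hσ =>
    have hx : (x ∘ ⇑σ⁻¹) ∘ σ = x := by
      rw [Function.comp_assoc, ← Equiv.Perm.coe_mul, inv_mul_cancel, Equiv.Perm.coe_one,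
        Function.comp_id]
    simpa only [← Function.comp_assoc, hx] using (hσ (x ∘ ⇑σ⁻¹)).symm

variable (K : Type) [Field K]

/-- The generators of the fixed field of `groupG34`. -/
def invariantG34 : Fin 3 ⊕ Fin 3 ⊕ Fin 2 → RFF K (Fin 8) :=
  blockInvariant (Xvar K (Fin 8) ∘ leftBlock) (Xvar K (Fin 8) ∘ rightBlock)

variable {K}

lemma permHom_comp_Xvar_comp {I J : Type} (σ : Equiv.Perm I) (f : J → I) :
    ⇑(permHom K I σ) ∘ Xvar K I ∘ f = Xvar K I ∘ σ ∘ f :=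
  funext fun j => permHom_Xvar σ (f j)

lemma invariantG34_mem_fixedSub (k : Fin 3 ⊕ Fin 3 ⊕ Fin 2) :
    invariantG34 K k ∈ fixedSub K (Fin 8) groupG34 := by
  refine (mem_fixedSub_iff _).2 fun σ hσ => ?_
  have hmap := map_blockInvariant (Xvar K (Fin 8) ∘ leftBlock) (Xvar K (Fin 8) ∘ rightBlock)
    (permHom K (Fin 8) σ : RFF K (Fin 8) →+* RFF K (Fin 8)) k
  simp only [RingHom.coe_coe, permHom_comp_Xvar_comp, blockInvariant_comp_of_mem hσ] at hmap
  exact hmap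

lemma pairingPole_leftBlock_add_rightBlock_injective
    (hp : Function.Injective (pairingPole (Xvar K (Fin 8) ∘ leftBlock))) :
    Function.Injective (pairingPole (Xvar K (Fin 8) ∘ leftBlock) +
      pairingPole (Xvar K (Fin 8) ∘ rightBlock)) := by
  have hl : ∀ i : Fin 3, Equiv.swap (leftBlock 0) (leftBlock i.succ) ∘ leftBlock =
      leftBlock ∘ Equiv.swap 0 i.succ := by decide
  have hr : ∀ i : Fin 3, Equiv.swap (leftBlock 0) (leftBlock i.succ) ∘ rightBlock =
      rightBlock := by decide
  refine pairingPole_add_injective hp (fun i =>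
    (permHom K (Fin 8) (Equiv.swap (leftBlock 0) (leftBlock i.succ)) :
      RFF K (Fin 8) →+* RFF K (Fin 8))) (fun i => ?_) fun i => ?_
  · rw [RingHom.coe_coe, permHom_comp_Xvar_comp, hl, Function.comp_assoc]
  · rw [RingHom.coe_coe, permHom_comp_Xvar_comp, hr]

lemma rank_adjoin_invariantG34_le :
    Module.rank (adjoin K (Set.range (invariantG34 K))) (RFF K (Fin 8)) ≤ 96 := by
  have hl : Function.Injective (Xvar K (Fin 8) ∘ leftBlock) :=
    Xvar_injective.comp (Fin.castAdd_injective 4 4)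
  have hr : Function.Injective (Xvar K (Fin 8) ∘ rightBlock) :=
    Xvar_injective.comp (Fin.natAdd_injective 4 4)
  have hgap {f : Fin 4 → Fin 8} (hf : Function.Injective f) (i : Fin 3) :
      pairingGap (Xvar K (Fin 8) ∘ f) i ≠ 0 :=
    Xvar_add_sub_sub_ne_zero (hf.ne (Fin.succ_ne_zero _)) (hf.ne (Fin.succ_ne_zero _))
      (hf.ne (Fin.succ_ne_zero _))
  have hgapl := hgap (Fin.castAdd_injective 4 4)
  have hgapr := hgap (Fin.natAdd_injective 4 4)
  have hblocks : Set.range leftBlock ∪ Set.range rightBlock = Set.univ :=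
    Set.eq_univ_of_forall
      (by decide : ∀ i, (∃ j, leftBlock j = i) ∨ ∃ j, rightBlock j = i)
  have htop : adjoin K (Set.range (Xvar K (Fin 8) ∘ leftBlock) ∪
      Set.range (Xvar K (Fin 8) ∘ rightBlock)) = ⊤ := by
    rw [Set.range_comp, Set.range_comp, ← Set.image_union, hblocks, Set.image_univ,
      adjoin_range_Xvar]
  rw [← relrank_top_right]
  exact relrank_adjoin_blockInvariant_top_le hl hr hgapl hgapr
    (pairingPole_leftBlock_add_rightBlock_injective (pairingPole_injective hl hgapl)) htop

end RationalityG34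

/-- **Rationality for `G₃₄`.** For any field `K`, the subgroup `G₃₄ ⊆ S₈` of order 96 generated by `(1,2)(3,4)`, `φ̃₁ = (2,3,4)(6,7,8)` and `κ̃ = (1,5)(2,6)(3,8)(4,7)` has `K`-rational fixed field. -/
theorem rationality_G34 (K : Type) [Field K] :
    IsRatExt K ↥(fixedSub K (Fin 8) (Subgroup.closure
      {Equiv.swap (0 : Fin 8) 1 * Equiv.swap 2 3,
       (Equiv.swap (1 : Fin 8) 2 * Equiv.swap 2 3) * (Equiv.swap (5 : Fin 8) 6 * Equiv.swap 6 7),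
       Equiv.swap (0 : Fin 8) 4 * Equiv.swap 1 5 * Equiv.swap 2 7 * Equiv.swap 3 6})) :=
  isRatExt_fixedSub_of_rank_le groupG34 (by simp) invariantG34_mem_fixedSub
    (rank_adjoin_invariantG34_le.trans (by exact_mod_cast card_groupG34_ge))
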